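/- Let k = (k_1,…,k_s) be a sequence of positive integers with n = k_1+…+k_s, terminal vertices v_i = (n_i, n−n_i) for 0 ≤ i ≤ s, and let w = ((α_1,β_1),…,(α_{s−1},β_{s−1})) ∈ W_{s−1}, with the conventions α_s = β_0 = 1, α_0 = 0, β_s = 0. Let g_w be the subgraph of Γ_k with edge set {(v_i−(1,0), v_i) : α_i = 1} ∪ {(v_i−(0,1), v_i) : β_i = 1} and vertex set the endpoints of these edges, and let V_{n−1}(g_w) = V(g_w) ∩ {(x,y) : x+y = n−1}. Then the ladder diagram Γ_{r_w(k)*w̃} equals the ladder diagram whose set of terminal vertices is V_{n−1}(g_w); in particular, the set of terminal vertices of Γ_{r_w(k)*w̃} is V_{n−1}(g_w). -/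

import Mathlib

open Classical

noncomputable section

/-- Partial sums of the (0-indexed) sequence `k`: `nseq k i = k 0 + ⋯ + k (i-1)`;
so `nseq k i` is the paper's `n_i` for the sequence `(k_1, …, k_s) = (k 0, …, k (s-1))`. -/
def nseq (k : ℕ → ℕ) (i : ℕ) : ℕ := ∑ j ∈ Finset.range i, k j

/-- The set of terminal vertices `T_k = {(n_i, n - n_i) : 0 ≤ i ≤ s}` of the ladder diagram. -/
def terminals (s : ℕ) (k : ℕ → ℕ) : Set (ℕ × ℕ) :=
  {v | ∃ i ≤ s, v = (nseq k i, nseq k s - nseq k i)}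

/-- The vertex set of the ladder diagram `Γ_k`. -/
def ladderV (s : ℕ) (k : ℕ → ℕ) : Set (ℕ × ℕ) :=
  {v | ∃ t ∈ terminals s k, v.1 ≤ t.1 ∧ v.2 ≤ t.2}

/-- A unit grid step: one step to the right or one step up. -/
def gridStep (v w : ℕ × ℕ) : Prop :=
  w = (v.1 + 1, v.2) ∨ w = (v.1, v.2 + 1)

/-- The edge set of the ladder diagram `Γ_k`. -/
def ladderE (s : ℕ) (k : ℕ → ℕ) : Set ((ℕ × ℕ) × (ℕ × ℕ)) :=
  {e | e.1 ∈ ladderV s k ∧ e.2 ∈ ladderV s k ∧ gridStep e.1 e.2}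

/-- A combinatorial (directed) graph in the grid `ℤ_{≥0} × ℤ_{≥0}`,
given by a set of vertices and a set of edges. -/
@[ext] structure LGraph where
  V : Set (ℕ × ℕ)
  E : Set ((ℕ × ℕ) × (ℕ × ℕ))

/-- Subgraph inclusion order on grid graphs. -/
instance : PartialOrder LGraph where
  le γ γ' := γ.V ⊆ γ'.V ∧ γ.E ⊆ γ'.E
  le_refl γ := ⟨subset_rfl, subset_rfl⟩
  le_trans a b c h h' := ⟨h.1.trans h'.1, h.2.trans h'.2⟩
  le_antisymm a b h h' := LGraph.ext (subset_antisymm h.1 h'.1) (subset_antisymm h.2 h'.2)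

/-- The ladder diagram `Γ_k` as a grid graph. -/
def ladder (s : ℕ) (k : ℕ → ℕ) : LGraph :=
  ⟨ladderV s k, ladderE s k⟩

/-- A positive path: (the graph of) a shortest path in the ladder diagram `Γ_k`
from the origin `(0,0)` to a terminal vertex. -/
def IsPositivePath (s : ℕ) (k : ℕ → ℕ) (p : LGraph) : Prop :=
  ∃ (m : ℕ) (f : ℕ → ℕ × ℕ),
    f 0 = (0, 0) ∧ f m ∈ terminals s k ∧
    (∀ i < m, gridStep (f i) (f (i + 1))) ∧
    (∀ i ≤ m, f i ∈ ladderV s k) ∧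
    p.V = {v | ∃ i ≤ m, v = f i} ∧
    p.E = {e | ∃ i < m, e = (f i, f (i + 1))}

/-- A face of the ladder diagram `Γ_k`: a subgraph which contains all terminal
vertices and is a union of positive paths. -/
def IsLadderFace (s : ℕ) (k : ℕ → ℕ) (γ : LGraph) : Prop :=
  terminals s k ⊆ γ.V ∧
  ∃ P : Set LGraph, (∀ p ∈ P, IsPositivePath s k p) ∧
    γ.V = ⋃ p ∈ P, LGraph.V p ∧ γ.E = ⋃ p ∈ P, LGraph.E p

/-- The dimension (first Betti number) of a face of a ladder diagram:
`|E(γ)| - |V(γ)| + 1`. -/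
def ldim (γ : LGraph) : ℤ :=
  (γ.E.ncard : ℤ) - (γ.V.ncard : ℤ) + 1

/-- The index set `I = {(i,j) : i,j ≥ 1, i+j ≤ n}` of the coordinates of a
Gelfand–Cetlin pattern. -/
def GCIdx (n : ℕ) : Set (ℕ × ℕ) := {p | 1 ≤ p.1 ∧ 1 ≤ p.2 ∧ p.1 + p.2 ≤ n}

/-- The entries of a Gelfand–Cetlin pattern `x`, extended by the boundary
condition `x_{i, n+1-i} = λ_i`. -/
def gcEntry (n : ℕ) (lam : ℕ → ℝ) (x : GCIdx n → ℝ) (p : ℕ × ℕ) : ℝ :=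
  if h : p ∈ GCIdx n then x ⟨p, h⟩ else lam p.1

/-- The Gelfand–Cetlin polytope `P_λ`: the set of points `(x_{i,j})_{(i,j) ∈ I}`
with `x_{i,j+1} ≥ x_{i,j} ≥ x_{i+1,j}` for all `(i,j) ∈ I`, where
`x_{i,n+1-i} = λ_i`. -/
def GCPoly (n : ℕ) (lam : ℕ → ℝ) : Set (GCIdx n → ℝ) :=
  {x | ∀ i j : ℕ, (i, j) ∈ GCIdx n →
    gcEntry n lam x (i, j) ≤ gcEntry n lam x (i, j + 1) ∧
    gcEntry n lam x (i + 1, j) ≤ gcEntry n lam x (i, j)}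

/-- The subset of `P_λ` obtained by turning the inequalities
`x_{i,j+1} ≥ x_{i,j}` for `(i,j) ∈ SH` and `x_{i,j} ≥ x_{i+1,j}` for
`(i,j) ∈ SV` into equalities. -/
def GCFaceOf (n : ℕ) (lam : ℕ → ℝ) (SH SV : Set (ℕ × ℕ)) : Set (GCIdx n → ℝ) :=
  {x | x ∈ GCPoly n lam ∧
    (∀ p ∈ SH, gcEntry n lam x (p.1, p.2 + 1) = gcEntry n lam x p) ∧
    (∀ p ∈ SV, gcEntry n lam x p = gcEntry n lam x (p.1 + 1, p.2))}

/-- A face of the GC polytope: a nonempty solution set of the system obtained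
by replacing some of the defining inequalities by equalities. -/
def IsGCFace (n : ℕ) (lam : ℕ → ℝ) (F : Set (GCIdx n → ℝ)) : Prop :=
  F.Nonempty ∧ ∃ SH SV : Set (ℕ × ℕ), SH ⊆ GCIdx n ∧ SV ⊆ GCIdx n ∧
    F = GCFaceOf n lam SH SV

/-- The dimension of (a face of) the GC polytope: the dimension of its affine span. -/
def GCdim (n : ℕ) (F : Set (GCIdx n → ℝ)) : ℕ :=
  Module.finrank ℝ (affineSpan ℝ F).direction

/-- `lam` (1-indexed) is weakly decreasing with block structure `k`: it is
constant on each block `(n_{i-1}, n_i]` and strictly decreases between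
consecutive blocks. -/
def HasBlockStructure (s : ℕ) (k : ℕ → ℕ) (lam : ℕ → ℝ) : Prop :=
  (∀ i < s, ∀ a b : ℕ, nseq k i < a → a ≤ b → b ≤ nseq k (i + 1) → lam a = lam b) ∧
  (∀ i : ℕ, 1 ≤ i → i < s → lam (nseq k i + 1) < lam (nseq k i))

/-- The edge set of the graph `φ(F)` associated to a subset `F` of the GC polytope. -/
def phiE (n : ℕ) (lam : ℕ → ℝ) (F : Set (GCIdx n → ℝ)) :
    Set ((ℕ × ℕ) × (ℕ × ℕ)) :=
  {e | (∃ i < n, e = ((0, i), (0, i + 1)) ∨ e = ((i, 0), (i + 1, 0))) ∨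
    (∃ i j : ℕ, (i, j) ∈ GCIdx n ∧ e = ((i - 1, j), (i, j)) ∧
      ∃ x ∈ F, gcEntry n lam x (i, j) < gcEntry n lam x (i, j + 1)) ∨
    (∃ i j : ℕ, (i, j) ∈ GCIdx n ∧ e = ((i, j - 1), (i, j)) ∧
      ∃ x ∈ F, gcEntry n lam x (i + 1, j) < gcEntry n lam x (i, j))}

/-- The graph `φ(F)`: its edges are given by `phiE` and its vertices are the
endpoints of its edges. -/
def phiGC (n : ℕ) (lam : ℕ → ℝ) (F : Set (GCIdx n → ℝ)) : LGraph where
  V := {v | ∃ e ∈ phiE n lam F, v = e.1 ∨ v = e.2}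
  E := phiE n lam F

/-- The map `ψ`: for a subgraph `γ`, the set of points of `P_λ` where the
inequalities corresponding to the missing edges of `γ` become equalities. -/
def psiGC (n : ℕ) (lam : ℕ → ℝ) (γ : LGraph) : Set (GCIdx n → ℝ) :=
  {x | x ∈ GCPoly n lam ∧ ∀ i j : ℕ, (i, j) ∈ GCIdx n →
    (((i - 1, j), (i, j)) ∉ γ.E → gcEntry n lam x (i, j) = gcEntry n lam x (i, j + 1)) ∧
    (((i, j - 1), (i, j)) ∉ γ.E → gcEntry n lam x (i, j) = gcEntry n lam x (i + 1, j))}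
/-- The recursively defined point `x̄` of the proof of Lemma 2.6 (bijectivity):
`x̄_{i,j} = λ_i` if `i + j = n + 1`, and for `i + j ≤ n` it is determined from
`x̄_{i,j+1}` and `x̄_{i+1,j}` according to which of the two edges
`((i-1,j),(i,j))`, `((i,j-1),(i,j))` belong to `E`. -/
def barX (n : ℕ) (lam : ℕ → ℝ) (E : Set ((ℕ × ℕ) × (ℕ × ℕ))) : ℕ → ℕ → ℝ
  | i, j =>
    if h1 : n + 1 ≤ i + j then lam i
    else if h2 : ((i - 1, j), (i, j)) ∈ E then
      if h3 : ((i, j - 1), (i, j)) ∈ E then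
        (barX n lam E i (j + 1) + barX n lam E (i + 1) j) / 2
      else barX n lam E (i + 1) j
    else barX n lam E i (j + 1)
  termination_by i j => n + 1 - (i + j)
  decreasing_by all_goals omega

/-- `α, β : ℕ → ℕ` encode an element
`w = ((α_1,β_1),…,(α_{s-1},β_{s-1})) ∈ W_{s-1}`, with the conventions
`α_0 = 0`, `β_0 = 1`, `α_s = 1`, `β_s = 0`. -/
def IsW (s : ℕ) (α β : ℕ → ℕ) : Prop :=
  (∀ i : ℕ, 1 ≤ i → i < s →
    (α i, β i) = (1, 0) ∨ (α i, β i) = (0, 1) ∨ (α i, β i) = (1, 1)) ∧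
  α 0 = 0 ∧ β 0 = 1 ∧ α s = 1 ∧ β s = 0

/-- The edge set of the subgraph `g_w` of `Γ_k`: the horizontal edge into the
terminal vertex `v_i` when `α_i = 1` and the vertical edge into `v_i` when
`β_i = 1`. -/
def gwE (s : ℕ) (k α β : ℕ → ℕ) : Set ((ℕ × ℕ) × (ℕ × ℕ)) :=
  {e | ∃ i ≤ s,
    (α i = 1 ∧
      e = ((nseq k i - 1, nseq k s - nseq k i), (nseq k i, nseq k s - nseq k i))) ∨
    (β i = 1 ∧
      e = ((nseq k i, nseq k s - nseq k i - 1), (nseq k i, nseq k s - nseq k i)))}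

/-- The subgraph `g_w` of `Γ_k`. -/
def gwGraph (s : ℕ) (k α β : ℕ → ℕ) : LGraph where
  V := {v | ∃ e ∈ gwE s k α β, v = e.1 ∨ v = e.2}
  E := gwE s k α β

/-- The interleaved sequence `r_w(k) * w̃` of length `2s - 1` (0-indexed):
entry `2j` is `k''_{j+1} = k_{j+1} + 1 - α_{j+1} - β_j` and entry `2j + 1` is
`w̃_{j+1} = α_{j+1} β_{j+1}`. -/
def rstar (s : ℕ) (k α β : ℕ → ℕ) (t : ℕ) : ℕ :=
  if t % 2 = 0 then k (t / 2) + 1 - α (t / 2 + 1) - β (t / 2)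
  else α (t / 2 + 1) * β (t / 2 + 1)

/-- `α`-value of one of the three symbols `(1,0), (0,1), (1,1)`,
encoded as `0, 1, 2 : Fin 3` respectively. -/
def aW3 (c : Fin 3) : ℕ := if c = 1 then 0 else 1

/-- `β`-value of one of the three symbols `(1,0), (0,1), (1,1)`,
encoded as `0, 1, 2 : Fin 3` respectively. -/
def bW3 (c : Fin 3) : ℕ := if c = 0 then 0 else 1

/-- The function `α` of the element of `W_{s-1}` encoded by
`c : Fin (s-1) → Fin 3` (with the conventions `α_0 = 0`, `α_s = 1`). -/
def alph (s : ℕ) (c : Fin (s - 1) → Fin 3) (i : ℕ) : ℕ :=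
  if i = 0 then 0 else if h : i - 1 < s - 1 then aW3 (c ⟨i - 1, h⟩) else 1

/-- The function `β` of the element of `W_{s-1}` encoded by
`c : Fin (s-1) → Fin 3` (with the conventions `β_0 = 1`, `β_s = 0`). -/
def bet (s : ℕ) (c : Fin (s - 1) → Fin 3) (i : ℕ) : ℕ :=
  if i = 0 then 1 else if h : i - 1 < s - 1 then bW3 (c ⟨i - 1, h⟩) else 0

/-- The interleaved sequence `r_w(k) * w̃` (of length `2s - 1`, 0-indexed) for
the element `w ∈ W_{s-1}` encoded by `c`. -/
def newk (s : ℕ) (c : Fin (s - 1) → Fin 3) (k : ℕ → ℕ) (t : ℕ) : ℕ :=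
  if t % 2 = 0 then k (t / 2) + 1 - alph s c (t / 2 + 1) - bet s c (t / 2)
  else alph s c (t / 2 + 1) * bet s c (t / 2 + 1)

/-- `|w| = Σ_{i=1}^{s-1} α_i β_i` for the element `w ∈ W_{s-1}` encoded by `c`. -/
def wsize (s : ℕ) (c : Fin (s - 1) → Fin 3) : ℕ :=
  ∑ j ∈ Finset.range (s - 1), alph s c (j + 1) * bet s c (j + 1)

/-- The subgraph `g_w` of `Γ_k` for the element `w ∈ W_{s-1}` encoded by `c`. -/
def gwGraph3 (s : ℕ) (k : ℕ → ℕ) (c : Fin (s - 1) → Fin 3) : LGraph :=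
  gwGraph s k (alph s c) (bet s c)

/-- Union of two grid graphs (union of vertex sets and of edge sets). -/
def ugraph (γ δ : LGraph) : LGraph := ⟨γ.V ∪ δ.V, γ.E ∪ δ.E⟩

/-- The generating function `F_k(t) = Σ_{γ face of Γ_k} t^{dim γ}` of the
`f`-vector of the ladder diagram `Γ_k`, as a formal power series in `t`:
the coefficient of `t^d` is the number of faces of `Γ_k` of dimension `d`. -/
def fpol (s : ℕ) (k : ℕ → ℕ) : PowerSeries ℤ :=
  PowerSeries.mk fun d =>
    (Set.ncard {γ : LGraph | IsLadderFace s k γ ∧ ldim γ = (d : ℤ)} : ℤ)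

/-- The operator `Π_{i=1}^{s-1} (∂/∂x_i + ∂/∂x_{i+1} + t ∂/∂y_i)` applied to a
polynomial in the variables `x_1, x_2, … , y_1, y_2, …` (the variable `x_{i+1}`
is `Sum.inl i` and `y_{i+1}` is `Sum.inr i`) over `ℚ[t]`. -/
def Lfold (s : ℕ) (f : MvPolynomial (ℕ ⊕ ℕ) (Polynomial ℚ)) :
    MvPolynomial (ℕ ⊕ ℕ) (Polynomial ℚ) :=
  (List.range (s - 1)).foldl
    (fun g i =>
      MvPolynomial.pderiv (Sum.inl i) g + MvPolynomial.pderiv (Sum.inl (i + 1)) g +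
        (Polynomial.X : Polynomial ℚ) • MvPolynomial.pderiv (Sum.inr i) g) f

/-- The operator `D_w = Π_{i=1}^{s-1} (∂/∂x_i)^{1-α_i} (∂/∂x_{i+1})^{1-β_i}
(t ∂/∂y_i)^{α_i β_i}` for the element `w ∈ W_{s-1}` encoded by
`c : Fin (s-1) → Fin 3` (`0 ↦ (1,0)`, `1 ↦ (0,1)`, `2 ↦ (1,1)`). -/
def DfoldC (s : ℕ) (c : Fin (s - 1) → Fin 3)
    (f : MvPolynomial (ℕ ⊕ ℕ) (Polynomial ℚ)) : MvPolynomial (ℕ ⊕ ℕ) (Polynomial ℚ) :=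
  (List.finRange (s - 1)).foldl
    (fun g i =>
      if c i = 0 then MvPolynomial.pderiv (Sum.inl ((i : ℕ) + 1)) g
      else if c i = 1 then MvPolynomial.pderiv (Sum.inl (i : ℕ)) g
      else (Polynomial.X : Polynomial ℚ) • MvPolynomial.pderiv (Sum.inr (i : ℕ)) g) f

/-- The operator `D_w` for the element `w ∈ W_{s-1}` encoded by `α, β : ℕ → ℕ`. -/
def DfoldW (s : ℕ) (α β : ℕ → ℕ)
    (f : MvPolynomial (ℕ ⊕ ℕ) (Polynomial ℚ)) : MvPolynomial (ℕ ⊕ ℕ) (Polynomial ℚ) :=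
  (List.range (s - 1)).foldl
    (fun g j =>
      if α (j + 1) = 1 ∧ β (j + 1) = 1 then
        (Polynomial.X : Polynomial ℚ) • MvPolynomial.pderiv (Sum.inr j) g
      else if α (j + 1) = 1 then MvPolynomial.pderiv (Sum.inl (j + 1)) g
      else MvPolynomial.pderiv (Sum.inl j) g) f

/-- Substitution of `0` for all the variables `y_j = Sum.inr j`. -/
def setYzero :
    MvPolynomial (ℕ ⊕ ℕ) (Polynomial ℚ) →ₐ[Polynomial ℚ] MvPolynomial (ℕ ⊕ ℕ) (Polynomial ℚ) :=
  MvPolynomial.aeval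
    (Sum.elim (fun i => MvPolynomial.X (Sum.inl i)) fun _ => (0 : MvPolynomial (ℕ ⊕ ℕ) (Polynomial ℚ)))
end

/-!
Every edge of `g_w` is a unit step onto the antidiagonal `x + y = n`, so the vertices of `g_w` on
`x + y = n - 1` are the sources of its edges: the points with abscissa `n_i - 1` where `α_i = 1`
and those with abscissa `n_i` where `β_i = 1`. The partial sums of `r_w(k) * w̃` telescope, because
`α_i + β_i = 1 + α_i β_i`, to `n_j + β_j - 1` (after `2j` terms) and `n_{j+1} - α_{j+1}`
(after `2j + 1` terms). These are the same abscissae: `β_j = 0` forces `α_j = 1`, and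
`α_{j+1} = 0` forces `β_{j+1} = 1`.
-/

lemma nseq_succ (k : ℕ → ℕ) (i : ℕ) : nseq k (i + 1) = nseq k i + k i :=
  Finset.sum_range_succ k i

lemma nseq_mono (k : ℕ → ℕ) : Monotone (nseq k) :=
  monotone_nat_of_le_succ fun i => (nseq_succ k i).symm ▸ Nat.le_add_right _ _

lemma nseq_strictMonoOn {s : ℕ} {k : ℕ → ℕ} (hk : ∀ i < s, 0 < k i) :
    StrictMonoOn (nseq k) (Set.Iic s) := by
  refine strictMonoOn_of_lt_add_one Set.ordConnected_Iic fun i _ _ hi => ?_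
  rw [nseq_succ]
  exact Nat.lt_add_of_pos_right (hk i hi)

lemma mem_terminals_iff {s : ℕ} {k : ℕ → ℕ} {v : ℕ × ℕ} :
    v ∈ terminals s k ↔ v.1 + v.2 = nseq k s ∧ ∃ i ≤ s, nseq k i = v.1 := by
  constructor
  · rintro ⟨i, hi, rfl⟩
    exact ⟨Nat.add_sub_of_le (nseq_mono k hi), i, hi, rfl⟩
  · rintro ⟨hsum, i, hi, hx⟩
    exact ⟨i, hi, Prod.ext hx.symm (by omega)⟩

lemma rstar_two_mul (s : ℕ) (k α β : ℕ → ℕ) (j : ℕ) :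
    rstar s k α β (2 * j) = k j + 1 - α (j + 1) - β j := by
  simp [rstar]

lemma rstar_two_mul_add_one (s : ℕ) (k α β : ℕ → ℕ) (j : ℕ) :
    rstar s k α β (2 * j + 1) = α (j + 1) * β (j + 1) := by
  have hdiv : (2 * j + 1) / 2 = j := by omega
  simp [rstar, hdiv]

lemma gridStep.fst_add_snd_succ {v w : ℕ × ℕ} (h : gridStep v w) :
    v.1 + v.2 + 1 = w.1 + w.2 := by
  rcases h with rfl | rfl <;> dsimp only <;> omega

namespace IsW

variable {s : ℕ} {α β : ℕ → ℕ}

lemma alpha_zero (hW : IsW s α β) : α 0 = 0 := hW.2.1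

lemma beta_zero (hW : IsW s α β) : β 0 = 1 := hW.2.2.1

lemma alpha_length (hW : IsW s α β) : α s = 1 := hW.2.2.2.1

lemma beta_length (hW : IsW s α β) : β s = 0 := hW.2.2.2.2

lemma length_pos (hW : IsW s α β) : 0 < s := by
  refine Nat.pos_of_ne_zero ?_
  rintro rfl
  exact zero_ne_one (hW.alpha_zero.symm.trans hW.alpha_length)

lemma symbol_cases (hW : IsW s α β) {i : ℕ} (hi : i ≤ s) :
    (α i = 1 ∧ β i = 0) ∨ (α i = 0 ∧ β i = 1) ∨ (α i = 1 ∧ β i = 1) := by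
  rcases hi.eq_or_lt with rfl | his
  · exact .inl ⟨hW.alpha_length, hW.beta_length⟩
  rcases i.eq_zero_or_pos with rfl | hi0
  · exact .inr (.inl ⟨hW.alpha_zero, hW.beta_zero⟩)
  · simpa only [Prod.mk.injEq] using hW.1 i hi0 his

lemma add_eq_one_add_mul (hW : IsW s α β) {i : ℕ} (hi : i ≤ s) :
    α i + β i = 1 + α i * β i := by
  rcases hW.symbol_cases hi with ⟨hα, hβ⟩ | ⟨hα, hβ⟩ | ⟨hα, hβ⟩ <;> rw [hα, hβ]

lemma pos_of_alpha_eq_one (hW : IsW s α β) {i : ℕ} (hα : α i = 1) : 0 < i := by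
  refine Nat.pos_of_ne_zero ?_
  rintro rfl
  exact zero_ne_one (hW.alpha_zero.symm.trans hα)

lemma lt_of_beta_eq_one (hW : IsW s α β) {i : ℕ} (hi : i ≤ s) (hβ : β i = 1) : i < s := by
  refine hi.lt_of_ne ?_
  rintro rfl
  exact zero_ne_one (hW.beta_length.symm.trans hβ)

end IsW

section

variable {s : ℕ} {k α β : ℕ → ℕ}

lemma rstar_two_mul_add (hk : ∀ i < s, 0 < k i) (hW : IsW s α β) {j : ℕ} (hj : j < s) :
    rstar s k α β (2 * j) + α (j + 1) + β j = k j + 1 := by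
  have hkj := hk j hj
  have hα := hW.symbol_cases (i := j + 1) hj
  have hβ := hW.symbol_cases hj.le
  rw [rstar_two_mul]
  omega

lemma nseq_rstar_two_mul (hk : ∀ i < s, 0 < k i) (hW : IsW s α β) {j : ℕ} (hj : j < s) :
    nseq (rstar s k α β) (2 * j) + 1 = nseq k j + β j := by
  induction j with
  | zero => simp [nseq, hW.beta_zero]
  | succ j ih =>
    have hprev := ih (Nat.lt_of_succ_lt hj)
    have hentry := rstar_two_mul_add hk hW (Nat.lt_of_succ_lt hj)
    have hsymbol := hW.add_eq_one_add_mul hj.le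
    rw [Nat.mul_succ, nseq_succ, nseq_succ, nseq_succ, rstar_two_mul_add_one]
    omega

lemma nseq_rstar_two_mul_add_one (hk : ∀ i < s, 0 < k i) (hW : IsW s α β) {j : ℕ} (hj : j < s) :
    nseq (rstar s k α β) (2 * j + 1) + α (j + 1) = nseq k (j + 1) := by
  have heven := nseq_rstar_two_mul hk hW hj
  have hentry := rstar_two_mul_add hk hW hj
  rw [nseq_succ, nseq_succ]
  omega

lemma nseq_rstar_length (hk : ∀ i < s, 0 < k i) (hW : IsW s α β) :
    nseq (rstar s k α β) (2 * s - 1) + 1 = nseq k s := by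
  obtain ⟨j, rfl⟩ := Nat.exists_eq_add_one.mpr hW.length_pos
  have hlast := nseq_rstar_two_mul_add_one hk hW j.lt_succ_self
  rwa [hW.alpha_length] at hlast

lemma exists_nseq_rstar_eq_iff (hk : ∀ i < s, 0 < k i) (hW : IsW s α β) {x : ℕ} :
    (∃ t ≤ 2 * s - 1, nseq (rstar s k α β) t = x) ↔
      ∃ i ≤ s, (α i = 1 ∧ x + 1 = nseq k i) ∨ (β i = 1 ∧ x = nseq k i) := by
  have hs := hW.length_pos
  constructor
  · rintro ⟨t, ht, rfl⟩
    obtain ⟨j, rfl | rfl⟩ := t.even_or_odd'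
    · have hj : j < s := by omega
      have hsum := nseq_rstar_two_mul hk hW hj
      have hsymbol := hW.symbol_cases hj.le
      exact ⟨j, hj.le, by omega⟩
    · have hj : j < s := by omega
      have hsum := nseq_rstar_two_mul_add_one hk hW hj
      have hsymbol := hW.symbol_cases (i := j + 1) hj
      exact ⟨j + 1, hj, by omega⟩
  · rintro ⟨i, hi, ⟨hα, hx⟩ | ⟨hβ, hx⟩⟩
    · obtain ⟨j, rfl⟩ := Nat.exists_eq_add_one.mpr (hW.pos_of_alpha_eq_one hα)
      have hsum := nseq_rstar_two_mul_add_one hk hW hi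
      exact ⟨2 * j + 1, by omega, by omega⟩
    · have his := hW.lt_of_beta_eq_one hi hβ
      have hsum := nseq_rstar_two_mul hk hW his
      exact ⟨2 * i, by omega, by omega⟩

lemma nseq_pos_of_alpha_eq_one (hk : ∀ i < s, 0 < k i) (hW : IsW s α β) {i : ℕ} (hi : i ≤ s)
    (hα : α i = 1) : 0 < nseq k i :=
  (Nat.zero_le _).trans_lt <|
    nseq_strictMonoOn hk (Nat.zero_le s) hi (hW.pos_of_alpha_eq_one hα)

lemma nseq_lt_of_beta_eq_one (hk : ∀ i < s, 0 < k i) (hW : IsW s α β) {i : ℕ} (hi : i ≤ s)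
    (hβ : β i = 1) : nseq k i < nseq k s :=
  nseq_strictMonoOn hk hi Set.self_mem_Iic (hW.lt_of_beta_eq_one hi hβ)

lemma snd_mem_terminals_of_mem_gwE {e : (ℕ × ℕ) × (ℕ × ℕ)} (he : e ∈ gwE s k α β) :
    e.2 ∈ terminals s k := by
  obtain ⟨i, hi, ⟨_, rfl⟩ | ⟨_, rfl⟩⟩ := he <;> exact ⟨i, hi, rfl⟩

lemma gridStep_of_mem_gwE (hk : ∀ i < s, 0 < k i) (hW : IsW s α β)
    {e : (ℕ × ℕ) × (ℕ × ℕ)} (he : e ∈ gwE s k α β) : gridStep e.1 e.2 := by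
  obtain ⟨i, hi, ⟨hα, rfl⟩ | ⟨hβ, rfl⟩⟩ := he
  · have hpos := nseq_pos_of_alpha_eq_one hk hW hi hα
    exact .inl (Prod.ext (Nat.sub_add_cancel hpos).symm rfl)
  · have hlt := nseq_lt_of_beta_eq_one hk hW hi hβ
    exact .inr (Prod.ext rfl (Nat.sub_add_cancel (Nat.sub_pos_of_lt hlt)).symm)

lemma snd_sum_eq_of_mem_gwE {e : (ℕ × ℕ) × (ℕ × ℕ)} (he : e ∈ gwE s k α β) :
    e.2.1 + e.2.2 = nseq k s :=
  (mem_terminals_iff.mp (snd_mem_terminals_of_mem_gwE he)).1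

lemma fst_sum_succ_eq_of_mem_gwE (hk : ∀ i < s, 0 < k i) (hW : IsW s α β)
    {e : (ℕ × ℕ) × (ℕ × ℕ)} (he : e ∈ gwE s k α β) : e.1.1 + e.1.2 + 1 = nseq k s :=
  (gridStep_of_mem_gwE hk hW he).fst_add_snd_succ.trans (snd_sum_eq_of_mem_gwE he)

lemma gwGraph_V_inter_antidiagonal (hk : ∀ i < s, 0 < k i) (hW : IsW s α β) :
    (gwGraph s k α β).V ∩ {p | p.1 + p.2 = nseq k s - 1} = Prod.fst '' gwE s k α β := by
  have hn := nseq_pos_of_alpha_eq_one hk hW le_rfl hW.alpha_length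
  ext v
  constructor
  · rintro ⟨⟨e, he, rfl | rfl⟩, hv⟩
    · exact ⟨e, he, rfl⟩
    · have hsum : e.2.1 + e.2.2 = nseq k s - 1 := hv
      have htarget := snd_sum_eq_of_mem_gwE he
      omega
  · rintro ⟨e, he, rfl⟩
    exact ⟨⟨e, he, .inl rfl⟩, Nat.eq_sub_of_add_eq (fst_sum_succ_eq_of_mem_gwE hk hW he)⟩

lemma mem_image_fst_gwE_iff (hk : ∀ i < s, 0 < k i) (hW : IsW s α β) {v : ℕ × ℕ} :
    v ∈ Prod.fst '' gwE s k α β ↔ v.1 + v.2 + 1 = nseq k s ∧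
      ∃ i ≤ s, (α i = 1 ∧ v.1 + 1 = nseq k i) ∨ (β i = 1 ∧ v.1 = nseq k i) := by
  constructor
  · rintro ⟨e, he, rfl⟩
    refine ⟨fst_sum_succ_eq_of_mem_gwE hk hW he, ?_⟩
    obtain ⟨i, hi, ⟨hα, rfl⟩ | ⟨hβ, rfl⟩⟩ := he
    · exact ⟨i, hi, .inl ⟨hα, Nat.sub_add_cancel (nseq_pos_of_alpha_eq_one hk hW hi hα)⟩⟩
    · exact ⟨i, hi, .inr ⟨hβ, rfl⟩⟩
  · rintro ⟨hsum, i, hi, ⟨hα, hx⟩ | ⟨hβ, hx⟩⟩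
    · have hy : nseq k s - nseq k i = v.2 := by omega
      exact ⟨_, ⟨i, hi, .inl ⟨hα, rfl⟩⟩, Prod.ext (Nat.sub_eq_of_eq_add hx.symm) hy⟩
    · have hy : nseq k s - nseq k i - 1 = v.2 := by omega
      exact ⟨_, ⟨i, hi, .inr ⟨hβ, rfl⟩⟩, Prod.ext hx.symm hy⟩

lemma terminals_rstar (hk : ∀ i < s, 0 < k i) (hW : IsW s α β) :
    terminals (2 * s - 1) (rstar s k α β) = Prod.fst '' gwE s k α β := by
  ext v
  rw [mem_terminals_iff, mem_image_fst_gwE_iff hk hW, exists_nseq_rstar_eq_iff hk hW,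
    ← nseq_rstar_length hk hW, Nat.add_right_cancel_iff]

end

/-- Lemma 3.3. The ladder diagram `Γ_{r_w(k) * w̃}` equals
the ladder diagram whose set of terminal vertices is
`V_{n-1}(g_w) = V(g_w) ∩ {(x,y) : x + y = n - 1}`; in particular the set of
terminal vertices of `Γ_{r_w(k) * w̃}` is `V_{n-1}(g_w)`. -/
theorem rstar_ladder_eq (s : ℕ) (hs : 1 ≤ s) (k : ℕ → ℕ) (hk : ∀ i < s, 0 < k i)
    (α β : ℕ → ℕ) (hW : IsW s α β) :
    terminals (2 * s - 1) (rstar s k α β) =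
      (gwGraph s k α β).V ∩ {p : ℕ × ℕ | p.1 + p.2 = nseq k s - 1} ∧
    ladderV (2 * s - 1) (rstar s k α β) =
      {v : ℕ × ℕ | ∃ t ∈ (gwGraph s k α β).V ∩ {p : ℕ × ℕ | p.1 + p.2 = nseq k s - 1},
        v.1 ≤ t.1 ∧ v.2 ≤ t.2} := by
  have hterminals : terminals (2 * s - 1) (rstar s k α β) =
      (gwGraph s k α β).V ∩ {p : ℕ × ℕ | p.1 + p.2 = nseq k s - 1} :=
    (terminals_rstar hk hW).trans (gwGraph_V_inter_antidiagonal hk hW).symm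
  refine ⟨hterminals, ?_⟩
  rw [← hterminals]
  rfl
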